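/- arXiv:math/9904090 — 2 statements merged into one kernel-verified Lean document; each statement's English description precedes it below -/
import Mathlib

section
/- For all integers a ≥ 1 and b ≥ 1: 4(ab - 3a - 3b + 5) + 4b(b-3) > 0 if and only if (b = 4 and a ≥ 4) or (b ≥ 5 and a ≥ 1). -/
section OrderedRing

variable {R : Type*} [CommRing R] [LinearOrder R] [IsStrictOrderedRing R] {a b : R}

theorem signature_factor_pos_iff :
    0 < 4 * (a * b - 3 * a - 3 * b + 5) + 4 * b * (b - 3) ↔ 4 < (b - 3) * (a + b - 3) := by
  have factorization : 4 * (a * b - 3 * a - 3 * b + 5) + 4 * b * (b - 3) =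
      4 * ((b - 3) * (a + b - 3) - 4) := by ring
  rw [factorization, mul_pos_iff_of_pos_left four_pos, sub_pos]

theorem sub_three_mul_add_sub_three_le_four (ha : 0 ≤ a) (hb : 1 ≤ b) (hb' : b ≤ 3) :
    (b - 3) * (a + b - 3) ≤ 4 :=
  calc
    (b - 3) * (a + b - 3) ≤ (b - 3) * (b - 3) :=
      mul_le_mul_of_nonpos_left (by linarith) (by linarith)
    _ ≤ (-2) * (-2) := mul_le_mul_of_nonpos_of_nonpos (by linarith) (by linarith) (by linarith)
        (by linarith)
    _ = 4 := by norm_num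

theorem four_lt_sub_three_mul_add_sub_three (ha : 0 < a) (hb : 5 ≤ b) :
    4 < (b - 3) * (a + b - 3) :=
  calc
    4 = 2 * 2 := by norm_num
    _ < (b - 3) * (a + b - 3) := mul_lt_mul' (by linarith) (by linarith) zero_le_two (by linarith)

end OrderedRing

/-- The `k = 2` case of Corollary 5.7. -/
theorem stmt_10 (a b : ℤ) (ha : 1 ≤ a) (hb : 1 ≤ b) :
    4*(a*b - 3*a - 3*b + 5) + 4*b*(b-3) > 0 ↔
      (b = 4 ∧ a ≥ 4) ∨ (b ≥ 5 ∧ a ≥ 1) := by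
  rw [gt_iff_lt, signature_factor_pos_iff]
  obtain b_le_three | rfl | five_le_b : b ≤ 3 ∨ b = 4 ∨ 5 ≤ b := by omega
  · have := sub_three_mul_add_sub_three_le_four (by omega : 0 ≤ a) hb b_le_three
    omega
  · omega
  · have := four_lt_sub_three_mul_add_sub_three (by omega : 0 < a) five_le_b
    omega
end

section
/- For all integers k ≥ 4, a ≥ 1 and b ≥ 1: 4(ab - 3a - 3b + 5) + 2kb(b-3) > 0 if and only if b ≥ 4. -/
/-!
As a polynomial in `b` the bracket is a quadratic with leading coefficient `2 * k ≥ 0`. On `[1, 3]`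
it lies below its chord, whose endpoint values are `-4 * (2 * a + k - 2)` and `-16`. From `b = 4`,
where its value is `4 * (a + 2 * k - 7)`, it stays positive. No integer lies between `3` and `4`.
-/

section SignatureBracket

variable {R : Type*} [CommRing R] [LinearOrder R] [IsStrictOrderedRing R] {k a b : R}

theorem signatureBracket_nonpos_of_le_three (hk : 0 ≤ k) (hak : 2 ≤ 2 * a + k)
    (hb₁ : 1 ≤ b) (hb₃ : b ≤ 3) :
    4 * (a * b - 3 * a - 3 * b + 5) + 2 * k * b * (b - 3) ≤ 0 := by
  have hleft : 0 ≤ b - 1 := sub_nonneg.2 hb₁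
  have hright : 0 ≤ 3 - b := sub_nonneg.2 hb₃
  have hchord : 0 ≤ (2 * a + k - 2) * (3 - b) := mul_nonneg (sub_nonneg.2 hak) hright
  have hgap : 0 ≤ k * ((b - 1) * (3 - b)) := mul_nonneg hk (mul_nonneg hleft hright)
  calc 4 * (a * b - 3 * a - 3 * b + 5) + 2 * k * b * (b - 3)
      = -(2 * ((2 * a + k - 2) * (3 - b)) + 8 * (b - 1) + 2 * (k * ((b - 1) * (3 - b)))) := by
        ring
    _ ≤ 0 := by linarith only [hchord, hleft, hgap]

theorem signatureBracket_pos_of_four_le (hk : 0 ≤ k) (hak : 7 < a + 2 * k) (hb : 4 ≤ b) :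
    0 < 4 * (a * b - 3 * a - 3 * b + 5) + 2 * k * b * (b - 3) := by
  have hfour : 0 ≤ b - 4 := sub_nonneg.2 hb
  have hthree : 0 < b - 3 := by linarith
  have hvalue : 0 < (a + 2 * k - 7) * (b - 3) := mul_pos (sub_pos.2 hak) hthree
  have hquad : 0 ≤ k * ((b - 3) * (b - 4)) := mul_nonneg hk (mul_nonneg hthree.le hfour)
  calc 0 < 4 * ((a + 2 * k - 7) * (b - 3)) + 16 * (b - 4) + 2 * (k * ((b - 3) * (b - 4))) := by
        linarith only [hvalue, hfour, hquad]
    _ = 4 * (a * b - 3 * a - 3 * b + 5) + 2 * k * b * (b - 3) := by ring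

end SignatureBracket

theorem stmt_12_general (k a b : ℤ) (hk : 0 ≤ k) (hak₁ : 2 ≤ 2 * a + k) (hak₄ : 7 < a + 2 * k)
    (hb : 1 ≤ b) :
    4 * (a * b - 3 * a - 3 * b + 5) + 2 * k * b * (b - 3) > 0 ↔ b ≥ 4 := by
  refine ⟨fun hpos ↦ ?_, signatureBracket_pos_of_four_le hk hak₄⟩
  by_contra! hlt
  exact hpos.not_ge (signatureBracket_nonpos_of_le_three hk hak₁ hb (Int.le_of_lt_add_one hlt))

/-- The `k ≥ 4` case of Corollary 5.7. -/
theorem stmt_12 (k a b : ℤ) (hk : 4 ≤ k) (ha : 1 ≤ a) (hb : 1 ≤ b) :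
    4*(a*b - 3*a - 3*b + 5) + 2*k*b*(b-3) > 0 ↔ b ≥ 4 :=
  stmt_12_general k a b (by lia) (by lia) (by lia) hb
end
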